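/- There exists a nonempty legal sequence τ of moves in the auxiliary game whose initial position and resulting position both equal the starting position P and which satisfies F(τ, i, 2) = 1 for every i with 1 ≤ i ≤ m. -/

import Mathlib

/-!
The auxiliary game of Shitov, "Chess God's number grows exponentially".

Fix `m ≥ 1`.  The graph `G` has cycle vertices `(0,t)` for `t ∈ ℤ/3m` and triangle
vertices `(i,j)` for `1 ≤ i ≤ m`, `j ∈ {1,2,3}`.  We use 0-based indices: the
triangle vertex `(i,j)` of the paper (with `1 ≤ i ≤ m`, `1 ≤ j ≤ 3`) is
`Vtx.tri ⟨i-1⟩ ⟨j-1⟩`, and its paired cycle vertex `(0, 3i+j-3)` is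
`Vtx.cycle (pairC ⟨i-1⟩ ⟨j-1⟩)` where `pairC i j = 3*i + j + 1 (mod 3m)`.
-/

namespace AuxGame

/-- What occupies a vertex: nothing, the chip, or a switch. -/
inductive Occ : Type
  | empty : Occ
  | chip : Occ
  | switch : Occ
deriving DecidableEq

/-- Vertices of the graph `G`: the big cycle of length `3m`, and `m` triangles. -/
inductive Vtx (m : ℕ) : Type
  | cycle : ZMod (3 * m) → Vtx m
  | tri : Fin m → ZMod 3 → Vtx m
deriving DecidableEq

/-- The cycle vertex paired with the triangle vertex `(i,j)` (0-based):
this is the vertex `(0, 3i+j-3)` of the paper. -/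
def pairC {m : ℕ} (i : Fin m) (j : ZMod 3) : ZMod (3 * m) :=
  ((3 * i.val + j.val + 1 : ℕ) : ZMod (3 * m))

/-- Adjacency in `G`: consecutive vertices of the big cycle, and distinct
vertices of one triangle. -/
def Adjacent {m : ℕ} : Vtx m → Vtx m → Prop
  | .cycle t, .cycle t' => t' = t + 1 ∨ t' = t - 1
  | .tri i j, .tri i' j' => i = i' ∧ j ≠ j'
  | _, _ => False

/-- `u` and `v` form a pair `{(i,j), (0,3i+j-3)}` (in either order). -/
def IsPair {m : ℕ} : Vtx m → Vtx m → Prop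
  | .tri i j, .cycle t => t = pairC i j
  | .cycle t, .tri i j => t = pairC i j
  | _, _ => False

/-- A position of the auxiliary game: every vertex is empty, or carries the chip,
or carries (exactly) one switch; there is exactly one chip; and for every pair
`{(i,j), (0,3i+j-3)}` at least one of the two vertices carries a switch. -/
structure Pos (m : ℕ) where
  occ : Vtx m → Occ
  chip_exists_unique : ∃! v : Vtx m, occ v = Occ.chip
  switch_pair : ∀ (i : Fin m) (j : ZMod 3),
    occ (Vtx.tri i j) = Occ.switch ∨ occ (Vtx.cycle (pairC i j)) = Occ.switch

/-- A single move: the chip moves from vertex `from'` to vertex `to'`,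
transforming position `src` into position `dst`. -/
structure Move (m : ℕ) where
  src : Pos m
  dst : Pos m
  from' : Vtx m
  to' : Vtx m

/-- Legality of a single move: either a *jump* (the chip moves to an adjacent
vacant vertex of its triangle, or to an adjacent vacant vertex of the cycle),
or a *swap* (the chip, standing on one vertex of a pair, is exchanged with the
switch on the other vertex of that pair).  In both cases the destination gets
the chip, the source gets whatever was at the destination (nothing for a jump,
the switch for a swap), and all other vertices are unchanged. -/
def Move.Legal {m : ℕ} (mv : Move m) : Prop :=
  mv.src.occ mv.from' = Occ.chip ∧
  ((Adjacent mv.from' mv.to' ∧ mv.src.occ mv.to' = Occ.empty) ∨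
    (IsPair mv.from' mv.to' ∧ mv.src.occ mv.to' = Occ.switch)) ∧
  mv.dst.occ mv.to' = Occ.chip ∧
  mv.dst.occ mv.from' = mv.src.occ mv.to' ∧
  ∀ w : Vtx m, w ≠ mv.from' → w ≠ mv.to' → mv.dst.occ w = mv.src.occ w

/-- `Leads σ A B`: `σ` is a legal sequence of moves with initial position `A`
and resulting position `B` (each move is legal, and the resulting position of
each move is the initial position of the next one). -/
inductive Leads {m : ℕ} : List (Move m) → Pos m → Pos m → Prop
  | nil (A : Pos m) : Leads [] A A
  | cons (mv : Move m) (σ : List (Move m)) (B : Pos m) :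
      mv.Legal → Leads σ mv.dst B → Leads (mv :: σ) mv.src B

/-- `σ` is a legal sequence of moves. -/
def LegalSeq {m : ℕ} (σ : List (Move m)) : Prop :=
  ∃ A B : Pos m, Leads σ A B

/-- `#(σ, u, v)`: the number of single moves in `σ` carrying the chip from
vertex `u` to vertex `v` (used with `u`, `v` in one component, where such moves
are exactly jumps). -/
def jmpCount {m : ℕ} (σ : List (Move m)) (u v : Vtx m) : ℕ :=
  (σ.filter fun mv => decide (mv.from' = u ∧ mv.to' = v)).length

/-- The successor of a vertex in its own component: `(0,t) ↦ (0,t+1)` and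
`(i,j) ↦ (i,j+1 mod 3)`. -/
def nxt {m : ℕ} : Vtx m → Vtx m
  | .cycle t => .cycle (t + 1)
  | .tri i j => .tri i (j + 1)

/-- The predecessor of a vertex in its own component. -/
def prv {m : ℕ} : Vtx m → Vtx m
  | .cycle t => .cycle (t - 1)
  | .tri i j => .tri i (j - 1)

/-- Twice the flow through a vertex `v = (i₀,j₀)`:
`#(σ,i₀,j₀-1,j₀) + #(σ,i₀,j₀,j₀+1) - #(σ,i₀,j₀+1,j₀) - #(σ,i₀,j₀,j₀-1)` as an integer. -/
def dflow {m : ℕ} (σ : List (Move m)) (v : Vtx m) : ℤ :=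
  (jmpCount σ (prv v) v : ℤ) + (jmpCount σ v (nxt v) : ℤ)
    - (jmpCount σ (nxt v) v : ℤ) - (jmpCount σ v (prv v) : ℤ)

/-- The flow `F(σ, i₀, j₀)` through the vertex `v = (i₀,j₀)`. -/
def flow {m : ℕ} (σ : List (Move m)) (v : Vtx m) : ℚ :=
  (dflow σ v : ℚ) / 2

/-- `P` is the starting position: switches on `(i,1)`, `(i,3)`, `(0,3i-1)`
(0-based: `tri i 0`, `tri i 2`, `cycle (pairC i 1)`), the chip on some cycle
vertex not of the form `(0,3i-1)`, and all other vertices empty. -/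
def IsStarting {m : ℕ} (P : Pos m) : Prop :=
  (∀ i : Fin m,
    P.occ (Vtx.tri i 0) = Occ.switch ∧
    P.occ (Vtx.tri i 1) = Occ.empty ∧
    P.occ (Vtx.tri i 2) = Occ.switch ∧
    P.occ (Vtx.cycle (pairC i 1)) = Occ.switch) ∧
  ∃ t : ZMod (3 * m),
    (∀ i : Fin m, t ≠ pairC i 1) ∧
    P.occ (Vtx.cycle t) = Occ.chip ∧
    ∀ s : ZMod (3 * m), s ≠ t → (∀ i : Fin m, s ≠ pairC i 1) →
      P.occ (Vtx.cycle s) = Occ.empty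

end AuxGame

namespace AuxGame

lemma pairC_inj {m : ℕ} : Function.Injective (fun k : Fin m × ZMod 3 => pairC k.1 k.2) := by
  rintro ⟨i, j⟩ ⟨i', j'⟩ h
  simp only [pairC] at h
  have hj : j.val < 3 := ZMod.val_lt j
  have hj' : j'.val < 3 := ZMod.val_lt j'
  have hi := i.2
  have hi' := i'.2
  push_cast at h
  have h2 := add_right_cancel h
  have h3 : ((3 * i.val + j.val : ℕ) : ZMod (3 * m)) = ((3 * i'.val + j'.val : ℕ) : ZMod (3 * m)) := by
    push_cast; exact h2
  rw [ZMod.natCast_eq_natCast_iff', Nat.mod_eq_of_lt (by omega), Nat.mod_eq_of_lt (by omega)] at h3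
  have e1 : i = i' := Fin.ext (by omega)
  have e2 : j = j' := ZMod.val_injective 3 (by omega)
  rw [e1, e2]

lemma pairC_surj {m : ℕ} [NeZero m] :
    Function.Surjective (fun k : Fin m × ZMod 3 => pairC k.1 k.2) := by
  haveI : NeZero (3 * m) := ⟨by have := NeZero.ne m; omega⟩
  refine ((Fintype.bijective_iff_injective_and_card _).2 ⟨pairC_inj, ?_⟩).2
  simp [ZMod.card, mul_comm]

def vtx {m : ℕ} (q : (Fin m × ZMod 3) × Bool) : Vtx m :=
  match q with
  | (k, true) => Vtx.tri k.1 k.2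
  | (k, false) => Vtx.cycle (pairC k.1 k.2)

lemma vtx_bij {m : ℕ} [NeZero m] : Function.Bijective (vtx (m := m)) := by
  constructor
  · rintro ⟨⟨i, j⟩, _ | _⟩ ⟨⟨i', j'⟩, _ | _⟩ h
    · simp only [vtx, Vtx.cycle.injEq] at h
      have := @pairC_inj m (i, j) (i', j') h
      rw [this]
    · simp [vtx] at h
    · simp [vtx] at h
    · simpa [vtx] using h
  · rintro (t | ⟨i, j⟩)
    · obtain ⟨k, hk⟩ := pairC_surj t
      exact ⟨(k, false), by simpa [vtx] using hk⟩
    · exact ⟨((i, j), true), rfl⟩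

noncomputable def ve (m : ℕ) [NeZero m] : (Fin m × ZMod 3) × Bool ≃ Vtx m :=
  Equiv.ofBijective vtx vtx_bij

def oc {m : ℕ} (b : Fin m × ZMod 3 → Bool) (p : Fin m × ZMod 3)
    (q : (Fin m × ZMod 3) × Bool) : Occ :=
  if b q.1 = q.2 then (if q.1 = p then Occ.chip else Occ.empty) else Occ.switch

lemma ve_symm {m : ℕ} [NeZero m] (q) : (ve m).symm (vtx q) = q :=
  (ve m).symm_apply_apply q

noncomputable def mk {m : ℕ} [NeZero m] (b : Fin m × ZMod 3 → Bool) (p : Fin m × ZMod 3) :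
    Pos m where
  occ v := oc b p ((ve m).symm v)
  chip_exists_unique := by
    refine ⟨vtx (p, b p), ?_, ?_⟩
    · simp [ve_symm, oc]
    · intro w hw
      obtain ⟨⟨k, x⟩, rfl⟩ := vtx_bij.2 w
      simp only [ve_symm, oc] at hw
      split_ifs at hw with h1 h2
      subst h2; subst h1; rfl
  switch_pair i j := by
    have h1 := ve_symm (m := m) ((i, j), true)
    have h2 := ve_symm (m := m) ((i, j), false)
    simp only [vtx] at h1 h2
    rw [h1, h2]
    simp only [oc]
    cases b (i, j) <;> simp

lemma mk_occ {m : ℕ} [NeZero m] (b) (p : Fin m × ZMod 3) (q) :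
    (mk b p).occ (vtx q) = oc b p q := by
  simp [mk, ve_symm]

lemma legal_toggle {m : ℕ} [NeZero m] (b b' : Fin m × ZMod 3 → Bool) (p : Fin m × ZMod 3)
    (h : b' p = !b p) (h' : ∀ k, k ≠ p → b' k = b k) :
    (Move.mk (mk b p) (mk b' p) (vtx (p, b p)) (vtx (p, b' p))).Legal := by
  refine ⟨by simp [mk_occ, oc], Or.inr ⟨?_, ?_⟩, by simp [mk_occ, oc], ?_, ?_⟩
  · rw [h]; cases b p <;> simp [vtx, IsPair]
  · simp [mk_occ, oc, h]
  · simp [mk_occ, oc, h]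
  · intro w
    obtain ⟨⟨k, x⟩, rfl⟩ := vtx_bij.2 w
    intro h1 h2
    have hk : k ≠ p := by
      rintro rfl
      rw [h] at h2
      cases x <;> cases hb : b k <;> simp_all
    simp [mk_occ, oc, h' k hk, hk]

lemma legal_jump {m : ℕ} [NeZero m] (b : Fin m × ZMod 3 → Bool) (p p' : Fin m × ZMod 3)
    (hb : b p' = b p) (hp : p ≠ p') (ha : Adjacent (vtx (p, b p)) (vtx (p', b p'))) :
    (Move.mk (mk b p) (mk b p') (vtx (p, b p)) (vtx (p', b p'))).Legal := by
  refine ⟨by simp [mk_occ, oc], Or.inl ⟨ha, ?_⟩, by simp [mk_occ, oc], ?_, ?_⟩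
  · simp [mk_occ, oc, hp.symm]
  · simp [mk_occ, oc, hp, hp.symm]
  · intro w
    obtain ⟨⟨k, x⟩, rfl⟩ := vtx_bij.2 w
    intro h1 h2
    simp only [mk_occ, oc]
    by_cases hx : b k = x
    · subst hx
      have : k ≠ p := by rintro rfl; exact h1 rfl
      have : k ≠ p' := by rintro rfl; exact h2 rfl
      simp [*]
    · simp [hx]

def cc (x y z : Bool) (j : ZMod 3) : Bool := if j = 0 then x else if j = 1 then y else z

def bb {m : ℕ} (i : Fin m) (x y z : Bool) (k : Fin m × ZMod 3) : Bool :=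
  if k.1 = i then cc x y z k.2 else cc false true false k.2

def b0 {m : ℕ} (k : Fin m × ZMod 3) : Bool := cc false true false k.2

lemma bb_b0 {m : ℕ} (i : Fin m) : bb i false true false = b0 := by
  funext k; simp [bb, b0]

lemma pairC_01 {m : ℕ} (i : Fin m) : pairC i 1 = pairC i 0 + 1 := by
  have : (1 : ZMod 3).val = 1 := rfl
  simp [pairC, this]

lemma pairC_12 {m : ℕ} (i : Fin m) : pairC i 2 = pairC i 1 + 1 := by
  have : (1 : ZMod 3).val = 1 := rfl
  have h : (2 : ZMod 3).val = 2 := rfl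
  simp only [pairC, this, h]; push_cast; ring

lemma pairC_20 {m : ℕ} [NeZero m] (i : Fin m) : pairC (i + 1) 0 = pairC i 2 + 1 := by
  have h : (2 : ZMod 3).val = 2 := rfl
  have h0 : (0 : ZMod 3).val = 0 := rfl
  simp only [pairC, h, h0]
  rw [← Nat.cast_succ, ZMod.natCast_eq_natCast_iff, Fin.val_add, Fin.val_one']
  have h1 : (i.val + 1 % m) % m ≡ i.val + 1 [MOD m] := by
    simp [Nat.ModEq]
  have := (Nat.ModEq.mul_left' 3 h1).add_right 1
  convert this using 1
  omega

lemma dflow_append {m : ℕ} (σ τ : List (Move m)) (v) :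
    dflow (σ ++ τ) v = dflow σ v + dflow τ v := by
  simp only [dflow, jmpCount, List.filter_append, List.length_append]; push_cast; ring

lemma leads_append {m : ℕ} {σ τ : List (Move m)} {A B C : Pos m} (h : Leads σ A B)
    (h' : Leads τ B C) : Leads (σ ++ τ) A C := by
  induction h with
  | nil A => exact h'
  | cons mv σ B hl _ ih => exact Leads.cons mv _ _ hl (ih h')

lemma leads_cons {m : ℕ} {A B C : Pos m} {u v : Vtx m} {τ : List (Move m)}
    (h : (Move.mk A B u v).Legal) (h' : Leads τ B C) : Leads (⟨A, B, u, v⟩ :: τ) A C :=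
  Leads.cons ⟨A, B, u, v⟩ τ C h h'

lemma tog {m : ℕ} [NeZero m] (i : Fin m) (j : ZMod 3) (x y z x' y' z' s s' : Bool)
    (h1 : cc x y z j = s) (h2 : cc x' y' z' j = s')
    (h : s' = !s) (h' : ∀ k, k ≠ j → cc x' y' z' k = cc x y z k) :
    (Move.mk (mk (bb i x y z) (i, j)) (mk (bb i x' y' z') (i, j))
      (vtx ((i, j), s)) (vtx ((i, j), s'))).Legal := by
  have := legal_toggle (bb i x y z) (bb i x' y' z') (i, j) (by simp [bb, h1, h2, h]) (by
    rintro ⟨i', j'⟩ hk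
    by_cases hi : i' = i
    · subst hi
      have : j' ≠ j := by rintro rfl; exact hk rfl
      simp [bb, h' _ this]
    · simp [bb, hi])
  simpa [bb, h1, h2] using this

lemma jmp {m : ℕ} [NeZero m] (i : Fin m) (j j' : ZMod 3) (x y z s : Bool)
    (h1 : cc x y z j = s) (h2 : cc x y z j' = s)
    (hj : j ≠ j') (ha : Adjacent (vtx ((i, j), s)) (vtx ((i, j'), s))) :
    (Move.mk (mk (bb i x y z) (i, j)) (mk (bb i x y z) (i, j'))
      (vtx ((i, j), s)) (vtx ((i, j'), s))).Legal := by
  have := legal_jump (bb i x y z) (i, j) (i, j') (by simp [bb, h1, h2]) (by simp [hj])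
    (by simpa [bb, h1, h2] using ha)
  simpa [bb, h1, h2] using this

lemma pass {m : ℕ} [NeZero m] (i : Fin m) :
    ∃ τ : List (Move m), Leads τ (mk b0 (i, 0)) (mk b0 (i, 2)) ∧
      ∀ i', dflow τ (Vtx.tri i' 1) = if i' = i then 2 else 0 := by
  rw [← bb_b0 i]
  refine ⟨_, leads_cons (tog i 0 _ _ _ true true false false true rfl rfl rfl (by decide)) <|
    leads_cons (jmp i 0 1 _ _ _ true rfl rfl (by decide) (by simp [vtx, Adjacent])) <|
    leads_cons (tog i 1 _ _ _ true false false true false rfl rfl rfl (by decide)) <|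
    leads_cons (jmp i 1 2 _ _ _ false rfl rfl (by decide) (by simp [vtx, Adjacent, pairC_12])) <|
    leads_cons (tog i 2 _ _ _ true false true false true rfl rfl rfl (by decide)) <|
    leads_cons (jmp i 2 0 _ _ _ true rfl rfl (by decide) (by simp [vtx, Adjacent]; decide)) <|
    leads_cons (tog i 0 _ _ _ false false true true false rfl rfl rfl (by decide)) <|
    leads_cons (jmp i 0 1 _ _ _ false rfl rfl (by decide) (by simp [vtx, Adjacent, pairC_01])) <|
    leads_cons (tog i 1 _ _ _ false true true false true rfl rfl rfl (by decide)) <|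
    leads_cons (jmp i 1 2 _ _ _ true rfl rfl (by decide) (by simp [vtx, Adjacent]; decide)) <|
    leads_cons (tog i 2 _ _ _ false true false true false rfl rfl rfl (by decide)) <|
    Leads.nil _, ?_⟩
  intro i'
  have e1 : (1 : ZMod 3) + 1 = 2 := rfl
  have e2 : (2 : ZMod 3) ≠ 0 := by decide
  have e3 : (2 : ZMod 3) ≠ 1 := by decide
  have e4 : (1 : ZMod 3) ≠ 2 := by decide
  have e5 : (0 : ZMod 3) ≠ 2 := by decide
  by_cases hi : i' = i
  · subst hi
    simp [dflow, jmpCount, vtx, nxt, prv, e1, e2, e3, e4, e5]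
  · have hi' : i ≠ i' := Ne.symm hi
    simp [dflow, jmpCount, vtx, nxt, prv, hi, hi']

lemma link {m : ℕ} [NeZero m] (i : Fin m) :
    ∃ τ : List (Move m), Leads τ (mk b0 (i, 2)) (mk b0 (i + 1, 0)) ∧
      ∀ i', dflow τ (Vtx.tri i' 1) = 0 := by
  have e5 : (2 : ZMod 3) ≠ 0 := by decide
  have := legal_jump (m := m) b0 (i, 2) (i + 1, 0) rfl (by simp [e5])
    (by
      have h1 : b0 (i, (2 : ZMod 3)) = false := rfl
      have h2 : b0 (i + 1, (0 : ZMod 3)) = false := rfl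
      rw [h1, h2]
      simp [vtx, Adjacent, pairC_20])
  refine ⟨_, leads_cons this (Leads.nil _), ?_⟩
  intro i'
  have h1 : b0 (i, (2 : ZMod 3)) = false := rfl
  simp [dflow, jmpCount, vtx, nxt, prv, h1]

lemma chain {m : ℕ} [NeZero m] (j : ZMod 3) (c : Fin m)
    (h : ∀ i : Fin m, ∃ τ : List (Move m), Leads τ (mk b0 (i, j)) (mk b0 (i + 1, j)) ∧
      ∀ i', dflow τ (Vtx.tri i' 1) = if i' = i + c then 2 else 0) (i : Fin m) (n : ℕ) :
    ∃ τ : List (Move m), Leads τ (mk b0 (i, j)) (mk b0 (i + (Fin.ofNat m n), j)) ∧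
      ∀ i', dflow τ (Vtx.tri i' 1) =
        ∑ k ∈ Finset.range n, if i' = i + Fin.ofNat m k + c then 2 else 0 := by
  induction n with
  | zero => 
    refine ⟨[], ?_, by simp [dflow, jmpCount]⟩
    have : i + Fin.ofNat m 0 = i := by
      apply Fin.ext; simp [Fin.val_add, Nat.mod_eq_of_lt]
    rw [this]; exact Leads.nil _
  | succ n ih =>
    obtain ⟨τ, h1, h2⟩ := ih
    obtain ⟨σ, h3, h4⟩ := h (i + Fin.ofNat m n)
    refine ⟨τ ++ σ, ?_, ?_⟩
    · have : i + Fin.ofNat m (n + 1) = i + Fin.ofNat m n + 1 := by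
        apply Fin.ext; simp [Fin.val_add, add_assoc]
      rw [this]
      exact leads_append h1 h3
    · intro i'
      rw [dflow_append, h2, h4, Finset.sum_range_succ]

lemma loop {m : ℕ} [NeZero m] (j : ZMod 3) (c : Fin m)
    (h : ∀ i : Fin m, ∃ τ : List (Move m), Leads τ (mk b0 (i, j)) (mk b0 (i + 1, j)) ∧
      ∀ i', dflow τ (Vtx.tri i' 1) = if i' = i + c then 2 else 0) (i : Fin m) :
    ∃ τ : List (Move m), Leads τ (mk b0 (i, j)) (mk b0 (i, j)) ∧
      ∀ i', dflow τ (Vtx.tri i' 1) = 2 := by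
  obtain ⟨τ, h1, h2⟩ := chain j c h i m
  refine ⟨τ, ?_, ?_⟩
  · have : i + Fin.ofNat m m = i := by
      apply Fin.ext; simp [Fin.val_add, Nat.mod_eq_of_lt]
    rwa [this] at h1
  · intro i'
    rw [h2, Finset.sum_range]
    have : ∀ k : Fin m, (i' = i + Fin.ofNat m k.val + c) ↔ (k = i' - c - i) := by
      intro k
      have hk : Fin.ofNat m k.val = k := by apply Fin.ext; simp [Nat.mod_eq_of_lt]
      rw [hk]
      constructor
      · rintro rfl; abel
      · rintro rfl; abel
    simp only [this]
    simp

lemma start_eq {m : ℕ} [NeZero m] (P : Pos m) (hP : IsStarting P) :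
    ∃ i : Fin m, ∃ j : ZMod 3, (j = 0 ∨ j = 2) ∧ P = mk b0 (i, j) := by
  obtain ⟨h1, t, ht, hc, he⟩ := hP
  obtain ⟨⟨i, j⟩, rfl⟩ := pairC_surj t
  have hz : ∀ j : ZMod 3, j = 0 ∨ j = 1 ∨ j = 2 := by decide
  have hj : j ≠ 1 := by rintro rfl; exact ht i rfl
  refine ⟨i, j, by have := hz j; tauto, ?_⟩
  suffices P.occ = (mk b0 (i, j)).occ by
    cases P; simp only at this; subst this; rfl
  funext w
  obtain ⟨⟨⟨i', j'⟩, x⟩, rfl⟩ := vtx_bij.2 w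
  rw [mk_occ]
  obtain ⟨a0, a1, a2, a3⟩ := h1 i'
  have e2 : (2 : ZMod 3) ≠ 0 := by decide
  have e3 : (2 : ZMod 3) ≠ 1 := by decide
  cases x
  · by_cases hj' : j' = 1
    · subst hj'
      simp [vtx, oc, b0, cc, a3]
    · have hb : b0 (i', j') = false := by
        rcases hz j' with rfl | rfl | rfl
        · rfl
        · exact absurd rfl hj'
        · rfl
      by_cases hk : (i', j') = (i, j)
      · cases hk
        simpa [vtx, oc, hb] using hc
      · have : P.occ (Vtx.cycle (pairC i' j')) = Occ.empty := by
          apply he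
          · intro h; exact hk (@pairC_inj m (i', j') (i, j) h)
          · intro i'' h
            have := @pairC_inj m (i', j') (i'', 1) h
            exact hj' (by simpa using congrArg Prod.snd this)
        simp only [vtx, oc, hb, this, hk, if_true, if_false]
  · rcases hz j' with rfl | rfl | rfl
    · simp [vtx, oc, b0, cc, a0]
    · simp [vtx, oc, b0, cc, a1, Ne.symm hj]
    · simp [vtx, oc, b0, cc, a2, e2, e3]

end AuxGame

open AuxGame in
/-- There is a nonempty legal sequence `τ` leading from the
starting position `P` back to `P` with `F(τ, i, 2) = 1` for every `1 ≤ i ≤ m`. -/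
theorem statement4 (m : ℕ) (hm : 1 ≤ m) (P : Pos m) (hP : IsStarting P) :
    ∃ τ : List (Move m), τ ≠ [] ∧ Leads τ P P ∧
      ∀ i : Fin m, flow τ (Vtx.tri i 1) = 1 := by
  haveI : NeZero m := ⟨by omega⟩
  obtain ⟨i, j, hj, rfl⟩ := start_eq P hP
  have key : ∃ τ : List (Move m), Leads τ (mk b0 (i, j)) (mk b0 (i, j)) ∧
      ∀ i', dflow τ (Vtx.tri i' 1) = 2 := by
    rcases hj with rfl | rfl
    · refine loop 0 0 (fun i => ?_) i
      obtain ⟨τ, h1, h2⟩ := pass i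
      obtain ⟨σ, h3, h4⟩ := link i
      exact ⟨τ ++ σ, leads_append h1 h3, fun i' => by simp [dflow_append, h2, h4]⟩
    · refine loop 2 1 (fun i => ?_) i
      obtain ⟨τ, h1, h2⟩ := pass (i + 1)
      obtain ⟨σ, h3, h4⟩ := link i
      exact ⟨σ ++ τ, leads_append h3 h1, fun i' => by simp [dflow_append, h2, h4]⟩
  obtain ⟨τ, h1, h2⟩ := key
  refine ⟨τ, ?_, h1, fun i' => by simp [flow, h2]⟩
  rintro rfl
  have := h2 i
  simp [dflow, jmpCount] at this
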